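/- arXiv:2107.08025 — 3 statements merged into one kernel-verified Lean document; each statement's English description precedes it below -/
import Mathlib

section
/- Let d be a natural number, let r and f be positive integers, and let n_{i,j,k} be rational numbers indexed by triples (i,j,k) of natural numbers with i+j+k=d. Suppose that the polynomial identity \sum_{i+j+k=d} n_{i,j,k} (x+f t)^i y^j g^k = \sum_{i+j+k=d} n_{i,j,k} x^i (y+r t)^j g^k holds in the polynomial ring \mathbb{Q}[x,y,g,t]. Then for all natural numbers i, j, k with i+j+k=d one has n_{i,j,k} \cdot r^j \cdot i! \cdot j! = n_{i+j,0,k} \cdot f^j \cdot (i+j)!, i.e. n_{i,j,k} = n_{i+j,0,k} (f/r)^j \binom{i+j}{i}. -/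
/-!
The coefficient of `t` (the derivative in `t` at `t = 0`) on the two sides of the identity is
`∑ n i j k · i f · x^(i-1) y^j g^k` and `∑ n i j k · j r · x^i y^(j-1) g^k`. Comparing the
coefficients of `x^a y^b g^k` gives the one-step relation
`n (a+1) b k · (a+1) f = n a (b+1) k · (b+1) r`
(`succ_relation`), and iterating it `j` times moves `n (i+j) 0 k` to `n i j k`.
-/

open MvPolynomial Finset

/-- The exponent of the monomial `x^a y^b g^c`, with no `t`. -/
noncomputable def expo (a b c : ℕ) : Fin 4 →₀ ℕ :=
  Finsupp.single 0 a + Finsupp.single 1 b + Finsupp.single 2 c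

lemma expo_inj {a b c a' b' c' : ℕ} (h : expo a b c = expo a' b' c') :
    a = a' ∧ b = b' ∧ c = c' := by
  have h0 := DFunLike.congr_fun h 0
  have h1 := DFunLike.congr_fun h 1
  have h2 := DFunLike.congr_fun h 2
  simp [expo] at h0 h1 h2
  exact ⟨h0, h1, h2⟩

lemma coeff_expo (a b c a' b' c' : ℕ) (q : ℚ) :
    coeff (expo a b c) (C q * X 0 ^ a' * X 1 ^ b' * X 2 ^ c' : MvPolynomial (Fin 4) ℚ)
      = if a' = a ∧ b' = b ∧ c' = c then q else 0 := by
  have e : (C q * X 0 ^ a' * X 1 ^ b' * X 2 ^ c' : MvPolynomial (Fin 4) ℚ)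
      = monomial (expo a' b' c') q := by
    simp [expo, X_pow_eq_monomial, C_mul_monomial, monomial_mul]
  rw [e, coeff_monomial]
  refine if_congr ⟨expo_inj, ?_⟩ rfl rfl
  rintro ⟨rfl, rfl, rfl⟩
  rfl

/-- The substitution `t = 0`. -/
noncomputable def setT : MvPolynomial (Fin 4) ℚ →ₐ[ℚ] MvPolynomial (Fin 4) ℚ :=
  aeval ![X 0, X 1, X 2, 0]

/-- The linear coefficient in `t` of a summand on the left-hand side. For `a = 0` the exponent
`a - 1` is truncated, but the factor `a` vanishes. -/
lemma deriv_left (q f : ℚ) (a b c : ℕ) :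
    setT (pderiv 3 (C q * (X 0 + C f * X 3) ^ a * X 1 ^ b * X 2 ^ c))
      = C (q * a * f) * X 0 ^ (a - 1) * X 1 ^ b * X 2 ^ c := by
  simp [Derivation.leibniz, Derivation.leibniz_pow, pderiv_X, setT, algebraMap_eq]
  ring

/-- The linear coefficient in `t` of a summand on the right-hand side. -/
lemma deriv_right (q r : ℚ) (a b c : ℕ) :
    setT (pderiv 3 (C q * X 0 ^ a * (X 1 + C r * X 3) ^ b * X 2 ^ c))
      = C (q * b * r) * X 0 ^ a * X 1 ^ (b - 1) * X 2 ^ c := by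
  simp [Derivation.leibniz, Derivation.leibniz_pow, pderiv_X, setT, algebraMap_eq]
  ring

/-- The coefficient of `x^a y^b g^k t` in the identity: the coefficients `n` with `k` fixed satisfy a
two-term recursion along the line `i + j = d - k`. -/
lemma succ_relation (d : ℕ) (r f : ℕ)
    (n : ℕ → ℕ → ℕ → ℚ)
    (h : ∑ p ∈ (range (d+1) ×ˢ range (d+1) ×ˢ range (d+1)).filter
            (fun p => p.1 + p.2.1 + p.2.2 = d),
          C (n p.1 p.2.1 p.2.2) *
            ((X 0 : MvPolynomial (Fin 4) ℚ) + C (f : ℚ) * X 3) ^ p.1 *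
            (X 1) ^ p.2.1 * (X 2) ^ p.2.2
        = ∑ p ∈ (range (d+1) ×ˢ range (d+1) ×ˢ range (d+1)).filter
            (fun p => p.1 + p.2.1 + p.2.2 = d),
          C (n p.1 p.2.1 p.2.2) *
            (X 0 : MvPolynomial (Fin 4) ℚ) ^ p.1 *
            ((X 1) + C (r : ℚ) * X 3) ^ p.2.1 * (X 2) ^ p.2.2)
    (a b k : ℕ) (hd : a + 1 + b + k = d) :
    n (a+1) b k * ((a + 1 : ℕ) : ℚ) * f = n a (b+1) k * ((b + 1 : ℕ) : ℚ) * r := by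
  have H := congrArg (fun P => coeff (expo a b k) (setT (pderiv 3 P))) h
  simp only [map_sum, deriv_left, deriv_right, coeff_sum, coeff_expo] at H
  rw [sum_eq_single (a+1, b, k), sum_eq_single (a, b+1, k)] at H
  · simpa using H
  -- an exponent truncated at `0 - 1` comes with the coefficient `0`
  · rintro ⟨p, q, s⟩ _ hne
    rcases q with _ | q
    · simp
    · rw [if_neg]
      rintro ⟨rfl, h2, rfl⟩
      exact hne (by simp_all)
  · intro hn
    exact absurd (by simp; omega) hn
  · rintro ⟨p, q, s⟩ _ hne
    rcases p with _ | p
    · simp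
    · rw [if_neg]
      rintro ⟨h2, rfl, rfl⟩
      exact hne (by simp_all)
  · intro hn
    exact absurd (by simp; omega) hn

/-- Specialized coefficient relation from invariance of the universal polynomial under
twisting: if `∑_{i+j+k=d} n i j k (x+f t)^i y^j g^k = ∑_{i+j+k=d} n i j k x^i (y+r t)^j g^k`
in `ℚ[x,y,g,t]`, then `n i j k * r^j * i! * j! = n (i+j) 0 k * f^j * (i+j)!`
whenever `i+j+k = d`, i.e. `n i j k = n (i+j) 0 k * (f/r)^j * (i+j).choose i`. -/
theorem coefficient_relation_special (d : ℕ) (r f : ℕ) (hr : 0 < r) (hf : 0 < f)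
    (n : ℕ → ℕ → ℕ → ℚ)
    (h : ∑ p ∈ (range (d+1) ×ˢ range (d+1) ×ˢ range (d+1)).filter
            (fun p => p.1 + p.2.1 + p.2.2 = d),
          C (n p.1 p.2.1 p.2.2) *
            ((X 0 : MvPolynomial (Fin 4) ℚ) + C (f : ℚ) * X 3) ^ p.1 *
            (X 1) ^ p.2.1 * (X 2) ^ p.2.2
        = ∑ p ∈ (range (d+1) ×ˢ range (d+1) ×ˢ range (d+1)).filter
            (fun p => p.1 + p.2.1 + p.2.2 = d),
          C (n p.1 p.2.1 p.2.2) *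
            (X 0 : MvPolynomial (Fin 4) ℚ) ^ p.1 *
            ((X 1) + C (r : ℚ) * X 3) ^ p.2.1 * (X 2) ^ p.2.2) :
    ∀ i j k : ℕ, i + j + k = d →
      n i j k * (r : ℚ) ^ j * (Nat.factorial i : ℚ) * (Nat.factorial j : ℚ)
        = n (i+j) 0 k * (f : ℚ) ^ j * (Nat.factorial (i+j) : ℚ) := by
  intro i j k hd
  induction j generalizing i with
  | zero => simp
  | succ j ih =>
    have h1 := ih (i + 1) (by omega)
    have h2 := succ_relation d r f n h i j k (by omega)
    rw [show i + 1 + j = i + (j + 1) by ring] at h1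
    rw [Nat.factorial_succ i] at h1
    rw [Nat.factorial_succ j]
    push_cast at h1 h2 ⊢
    linear_combination (f : ℚ) * h1 - (r : ℚ) ^ j * (i.factorial : ℚ) * (j.factorial : ℚ) * h2
end

section
/- Let d be a natural number, let r and f be positive integers, and let n_{i,j,k} be rational numbers indexed by triples (i,j,k) of natural numbers with i+j+k=d. Suppose that the polynomial identity \sum_{i+j+k=d} n_{i,j,k} (x+f t)^i y^j g^k = \sum_{i+j+k=d} n_{i,j,k} x^i (y+r t)^j g^k holds in the polynomial ring \mathbb{Q}[x,y,g,t]. Then in \mathbb{Q}[x,y,g] one has \sum_{i+j+k=d} n_{i,j,k} x^i y^j g^k = \sum_{s=0}^{d} (n_{s,0,d-s} / r^s) (r x + f y)^s g^{d-s}. -/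
open MvPolynomial Finset

/-!
The invariance identity is specialised along `x ↦ x`, `y ↦ 0`, `g ↦ g`, `t ↦ y / r`. Its right-hand
side becomes the polynomial in question, while on its left-hand side only the terms with `j = 0`
survive, and these are `n i 0 (d-i) (x + f y / r)^i g^(d-i)`, where `x + f y / r = (r x + f y) / r`.
-/

/-- Structural conclusion from invariance of the universal polynomial under twisting:
if `∑_{i+j+k=d} n i j k (x+f t)^i y^j g^k = ∑_{i+j+k=d} n i j k x^i (y+r t)^j g^k`
in `ℚ[x,y,g,t]`, then in `ℚ[x,y,g]` one has
`∑_{i+j+k=d} n i j k x^i y^j g^k = ∑_{s=0}^{d} (n s 0 (d-s) / r^s) (r x + f y)^s g^(d-s)`. -/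
theorem universal_polynomial_structure (d : ℕ) (r f : ℕ) (hr : 0 < r) (hf : 0 < f)
    (n : ℕ → ℕ → ℕ → ℚ)
    (h : ∑ p ∈ (range (d+1) ×ˢ range (d+1) ×ˢ range (d+1)).filter
            (fun p => p.1 + p.2.1 + p.2.2 = d),
          C (n p.1 p.2.1 p.2.2) *
            ((X 0 : MvPolynomial (Fin 4) ℚ) + C (f : ℚ) * X 3) ^ p.1 *
            (X 1) ^ p.2.1 * (X 2) ^ p.2.2
        = ∑ p ∈ (range (d+1) ×ˢ range (d+1) ×ˢ range (d+1)).filter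
            (fun p => p.1 + p.2.1 + p.2.2 = d),
          C (n p.1 p.2.1 p.2.2) *
            (X 0 : MvPolynomial (Fin 4) ℚ) ^ p.1 *
            ((X 1) + C (r : ℚ) * X 3) ^ p.2.1 * (X 2) ^ p.2.2) :
    ∑ p ∈ (range (d+1) ×ˢ range (d+1) ×ˢ range (d+1)).filter
        (fun p => p.1 + p.2.1 + p.2.2 = d),
      C (n p.1 p.2.1 p.2.2) *
        (X 0 : MvPolynomial (Fin 3) ℚ) ^ p.1 * (X 1) ^ p.2.1 * (X 2) ^ p.2.2
      = ∑ s ∈ range (d+1),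
          C (n s 0 (d-s) / (r : ℚ) ^ s) *
            (C (r : ℚ) * (X 0 : MvPolynomial (Fin 3) ℚ) + C (f : ℚ) * X 1) ^ s *
            (X 2) ^ (d - s) := by
  have hr' : (r : ℚ) ≠ 0 := by positivity
  have hC : (C (r : ℚ) * C ((r : ℚ)⁻¹) : MvPolynomial (Fin 3) ℚ) = 1 := by
    rw [← C_mul, mul_inv_cancel₀ hr', C_1]
  have key := congrArg (aeval (![X 0, 0, X 2, C ((r : ℚ)⁻¹) * X 1] :
    Fin 4 → MvPolynomial (Fin 3) ℚ)) h
  simp only [map_sum, map_mul, map_pow, map_add, aeval_X, algHom_C, algebraMap_eq,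
    Matrix.cons_val, zero_add] at key
  rw [show C (r : ℚ) * (C ((r : ℚ)⁻¹) * X 1) = (X 1 : MvPolynomial (Fin 3) ℚ) by
    rw [← mul_assoc, hC, one_mul]] at key
  rw [← key]
  symm
  -- The terms on the right are those of the specialised sum at the indices `(s, 0, d - s)`.
  refine Finset.sum_of_injOn (fun s => (s, 0, d - s)) ?_ ?_ ?_ ?_
  · intro a _ b _ hab
    exact (Prod.mk.inj hab).1
  · intro s hs
    simp only [coe_range, Set.mem_Iio] at hs
    simp only [coe_filter, mem_product, mem_range, Set.mem_setOf_eq]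
    omega
  · rintro ⟨i, j, k⟩ hp hn
    simp only [mem_filter, mem_product, mem_range] at hp
    have hj : j ≠ 0 := by
      rintro rfl
      refine hn ⟨i, ?_, ?_⟩
      · simpa using hp.1.1
      · simp only [Prod.mk.injEq, true_and]
        omega
    simp [hj]
  · intro s _
    have hlin : (C (r : ℚ) * X 0 + C (f : ℚ) * X 1 : MvPolynomial (Fin 3) ℚ)
        = C (r : ℚ) * (X 0 + C (f : ℚ) * (C ((r : ℚ)⁻¹) * X 1)) := by
      linear_combination (-(C (f : ℚ) * X 1)) * hC
    rw [hlin, mul_pow, pow_zero, mul_one, ← mul_assoc, ← C_pow, ← C_mul,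
      div_mul_cancel₀ _ (pow_ne_zero s hr')]
end

section
/- Let r be a nonzero rational number and f a rational number, and let U be a polynomial in \mathbb{Q}[x,y,g]. Suppose that the identity U(x+f t, y, g) = U(x, y+r t, g) holds in the polynomial ring \mathbb{Q}[x,y,g,t]. Then there exists a polynomial V in \mathbb{Q}[w,g] such that U(x,y,g) = V(r x + f y, g) in \mathbb{Q}[x,y,g]. -/
/-!
Setting `y = 0` and then `t = y / r` in the identity `U(x + f t, y, g) = U(x, y + r t, g)` gives
`U(x + (f / r) y, 0, g) = U(x, y, g)`. Since `x + (f / r) y = (r x + f y) / r`, the polynomial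
`V(w, g) = U(w / r, 0, g)` has the required property.
-/

open MvPolynomial

/-- A polynomial `U ∈ ℚ[x,y,g]` satisfying `U(x+f t, y, g) = U(x, y+r t, g)` in
`ℚ[x,y,g,t]` (with `r ≠ 0`) depends on `x` and `y` only through `r x + f y`:
there is `V ∈ ℚ[w,g]` with `U(x,y,g) = V(r x + f y, g)`. -/
theorem twist_invariant_polynomial (r f : ℚ) (hr : r ≠ 0) (U : MvPolynomial (Fin 3) ℚ)
    (h : aeval ![(X 0 : MvPolynomial (Fin 4) ℚ) + C f * X 3, X 1, X 2] U
       = aeval ![(X 0 : MvPolynomial (Fin 4) ℚ), X 1 + C r * X 3, X 2] U) :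
    ∃ V : MvPolynomial (Fin 2) ℚ,
      U = aeval ![C r * (X 0 : MvPolynomial (Fin 3) ℚ) + C f * X 1, X 2] V := by
  have hC : (C r * C r⁻¹ : MvPolynomial (Fin 3) ℚ) = 1 := by
    rw [← C_mul, mul_inv_cancel₀ hr, C_1]
  refine ⟨aeval ![C r⁻¹ * (X 0 : MvPolynomial (Fin 2) ℚ), 0, X 1] U, ?_⟩
  -- The substitution `y ↦ 0`, `t ↦ y / r` in `h`.
  have h' := congrArg
    (aeval ![(X 0 : MvPolynomial (Fin 3) ℚ), 0, X 2, C r⁻¹ * X 1]) h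
  rw [← AlgHom.comp_apply, ← AlgHom.comp_apply, comp_aeval, comp_aeval] at h'
  rw [← AlgHom.comp_apply, comp_aeval]
  conv_lhs => rw [← aeval_X_left_apply U]
  convert h'.symm using 3
  · funext i
    fin_cases i
    · simp
    · simp [algebraMap_eq, ← mul_assoc, hC]
    · simp
  · funext i
    fin_cases i
    · simp [algebraMap_eq]
      linear_combination (X 0) * hC
    · simp
    · simp
end
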